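/- Let D, r, m be positive integers and let A be a random D×r real matrix whose entries are independent Gaussian random variables with mean 0 and variance 1/D. Then for all fixed nonzero matrices U, V ∈ ℝ^{r×m} and every t > 0, P( |⟨AU, AV⟩_F − ⟨U, V⟩_F| ≥ t ‖U‖_F ‖V‖_F ) ≤ 2 / (D t²). -/

import Mathlib

open MeasureTheory ProbabilityTheory Matrix
open scoped NNReal

instance matrixMeasurableSpace {m n α : Type*} [MeasurableSpace α] :
    MeasurableSpace (Matrix m n α) :=
  inferInstanceAs (MeasurableSpace (m → n → α))

/-- The product Gaussian measure on `D × r` real matrices whose entries are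
independent Gaussians with mean `0` and variance `1/D`. -/
noncomputable def gaussianMatrix (D r : ℕ) : Measure (Matrix (Fin D) (Fin r) ℝ) :=
  Measure.pi fun _ : Fin D => Measure.pi fun _ : Fin r => gaussianReal 0 (D : ℝ≥0)⁻¹

/-- Frobenius inner product of two real matrices. -/
def frobInner {n m : Type*} [Fintype n] [Fintype m] (X Y : Matrix n m ℝ) : ℝ :=
  ∑ i, ∑ j, X i j * Y i j

/-- Frobenius norm of a real matrix. -/
noncomputable def frobNorm {n m : Type*} [Fintype n] [Fintype m] (X : Matrix n m ℝ) : ℝ :=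
  Real.sqrt (frobInner X X)

/-!
For a centred Gaussian measure, Isserlis' formula turns the covariance of two products of linear
forms into products of covariances of linear forms; it follows by polarization from the fourth
moment of a single form. For a random matrix `A` with independent centred Gaussian entries of
variance `v`, the covariance of `(A U)ᵢⱼ` and `(A V)ₖₗ` is `v (Uᵀ V)ⱼₗ` if `i = k` and `0`
otherwise. Hence `⟨A U, A V⟩` has mean `d v ⟨U, V⟩` and variance
`d v² (⟨Uᵀ U, Vᵀ V⟩ + ⟨Uᵀ V, Vᵀ U⟩)`, where `d` is the number of rows of `A`. By Cauchy-Schwarz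
and submultiplicativity of the Frobenius norm the variance is at most `2 d v² ‖U‖² ‖V‖²`, and
Chebyshev's inequality concludes.
-/

lemma iteratedDeriv_succ_id_mul_zero {f : ℝ → ℝ} {n : ℕ} (hf : ContDiffAt ℝ (n + 1) f 0) :
    iteratedDeriv (n + 1) (fun t ↦ t * f t) 0 = (n + 1) * iteratedDeriv n f 0 := by
  rw [iteratedDeriv_fun_mul (f := fun t ↦ t) (n := n + 1) (by fun_prop) (mod_cast hf),
    Finset.sum_eq_single 1]
  · simp
  · rintro (_ | _ | i) _ hi <;> simp_all [iteratedDeriv_fun_id]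
  · simp

lemma deriv_mgf_gaussianReal_zero (v : ℝ≥0) :
    deriv (mgf (fun x ↦ x) (gaussianReal 0 v)) =
      fun t ↦ v * (t * mgf (fun x ↦ x) (gaussianReal 0 v) t) := by
  ext t
  have hexponent : HasDerivAt (fun s : ℝ ↦ 0 * s + v * s ^ 2 / 2) (v * t) t := by
    simpa [mul_div_assoc] using ((hasDerivAt_pow 2 t).div_const 2).const_mul (v : ℝ)
  rw [mgf_fun_id_gaussianReal, hexponent.exp.deriv]
  ring

lemma integral_pow_add_two_gaussianReal (v : ℝ≥0) (n : ℕ) :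
    ∫ x, x ^ (n + 2) ∂gaussianReal 0 v = (n + 1) * v * ∫ x, x ^ n ∂gaussianReal 0 v := by
  have hmoment (k : ℕ) : ∫ x, x ^ k ∂gaussianReal 0 v =
      iteratedDeriv k (mgf (fun x ↦ x) (gaussianReal 0 v)) 0 := by
    rw [iteratedDeriv_mgf_zero (by simp)]
    simp
  have hsmooth : ContDiffAt ℝ (n + 1) (mgf (fun x ↦ x) (gaussianReal 0 v)) 0 := by
    rw [mgf_fun_id_gaussianReal]
    fun_prop
  rw [hmoment, hmoment, iteratedDeriv_succ', deriv_mgf_gaussianReal_zero,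
    iteratedDeriv_const_mul_field, iteratedDeriv_succ_id_mul_zero hsmooth]
  ring

lemma integral_pow_four_gaussianReal (v : ℝ≥0) :
    ∫ x, x ^ 4 ∂gaussianReal 0 v = 3 * (v : ℝ) ^ 2 := by
  rw [integral_pow_add_two_gaussianReal v 2, integral_pow_add_two_gaussianReal v 0]
  simp only [pow_zero, integral_const, probReal_univ]
  push_cast
  ring

section Isserlis

variable {E : Type*} [NormedAddCommGroup E] [NormedSpace ℝ E] [MeasurableSpace E] [BorelSpace E]
  {μ : Measure E} [IsGaussian μ]

lemma memLp_two_dual_mul_dual (L₁ L₂ : StrongDual ℝ E) :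
    MemLp (fun x ↦ L₁ x * L₂ x) 2 μ := by
  have : ENNReal.HolderTriple 4 4 2 := ⟨by
    rw [← two_mul, show (4 : ENNReal) = 2 * 2 by norm_num, ENNReal.mul_inv (by simp) (by simp),
      ← mul_assoc, ENNReal.mul_inv_cancel (by simp) (by simp), one_mul]⟩
  exact (IsGaussian.memLp_dual μ L₂ 4 (by simp)).mul' (IsGaussian.memLp_dual μ L₁ 4 (by simp))

lemma integrable_dual_mul_four (L₁ L₂ L₃ L₄ : StrongDual ℝ E) :
    Integrable (fun x ↦ L₁ x * L₂ x * (L₃ x * L₄ x)) μ :=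
  (memLp_two_dual_mul_dual L₁ L₂).integrable_mul (memLp_two_dual_mul_dual L₃ L₄)

variable [CompleteSpace E] [SecondCountableTopology E]

lemma integral_dual_eq_zero (hμ : ∫ x, x ∂μ = 0) (L : StrongDual ℝ E) : ∫ x, L x ∂μ = 0 := by
  rw [L.integral_comp_comm IsGaussian.integrable_fun_id, hμ, map_zero]

lemma integral_dual_mul_dual (hμ : ∫ x, x ∂μ = 0) (L₁ L₂ : StrongDual ℝ E) :
    ∫ x, L₁ x * L₂ x ∂μ = covarianceBilinDual μ L₁ L₂ := by
  simp [covarianceBilinDual_apply IsGaussian.memLp_two_id, integral_dual_eq_zero hμ]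

lemma integral_dual_pow_four (hμ : ∫ x, x ∂μ = 0) (L : StrongDual ℝ E) :
    ∫ x, L x ^ 4 ∂μ = 3 * covarianceBilinDual μ L L ^ 2 := by
  have hlaw : μ.map L = gaussianReal 0 Var[L; μ].toNNReal := by
    rw [IsGaussian.map_eq_gaussianReal, integral_dual_eq_zero hμ]
  rw [← integral_map (f := fun y : ℝ ↦ y ^ 4) (by fun_prop) (by fun_prop), hlaw,
    integral_pow_four_gaussianReal, Real.coe_toNNReal _ (variance_nonneg _ _),
    covarianceBilinDual_self_eq_variance IsGaussian.memLp_two_id]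

lemma integral_dual_mul_self_mul_self (hμ : ∫ x, x ∂μ = 0) (L M : StrongDual ℝ E) :
    ∫ x, L x * L x * (M x * M x) ∂μ =
      covarianceBilinDual μ L L * covarianceBilinDual μ M M +
        2 * covarianceBilinDual μ L M ^ 2 := by
  have hInt (N : StrongDual ℝ E) : Integrable (fun x ↦ N x ^ 4) μ :=
    (integrable_dual_mul_four N N N N).congr (.of_forall fun x ↦ by ring)
  have hsum : Integrable (fun x ↦ (L + M) x ^ 4 + (L - M) x ^ 4) μ :=
    (hInt (L + M)).add (hInt (L - M))
  have hsum' : Integrable (fun x ↦ 2 * L x ^ 4 + 2 * M x ^ 4) μ :=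
    ((hInt L).const_mul 2).add ((hInt M).const_mul 2)
  have hpolar (x : E) : L x * L x * (M x * M x) =
      12⁻¹ * ((L + M) x ^ 4 + (L - M) x ^ 4 - (2 * L x ^ 4 + 2 * M x ^ 4)) := by
    simp only [_root_.add_apply, _root_.sub_apply]
    ring
  simp_rw [hpolar]
  rw [integral_const_mul, integral_sub hsum hsum', integral_add (hInt (L + M)) (hInt (L - M)),
    integral_add ((hInt L).const_mul 2) ((hInt M).const_mul 2), integral_const_mul,
    integral_const_mul]
  repeat rw [integral_dual_pow_four hμ]
  simp only [map_add, map_sub, _root_.add_apply, _root_.sub_apply, covarianceBilinDual_comm M L]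
  ring

lemma integral_dual_mul_dual_mul_self (hμ : ∫ x, x ∂μ = 0) (L₁ L₂ M : StrongDual ℝ E) :
    ∫ x, L₁ x * L₂ x * (M x * M x) ∂μ =
      covarianceBilinDual μ L₁ L₂ * covarianceBilinDual μ M M +
        2 * (covarianceBilinDual μ L₁ M * covarianceBilinDual μ L₂ M) := by
  have hpolar (x : E) : L₁ x * L₂ x * (M x * M x) =
      4⁻¹ * ((L₁ + L₂) x * (L₁ + L₂) x * (M x * M x) -
        (L₁ - L₂) x * (L₁ - L₂) x * (M x * M x)) := by
    simp only [_root_.add_apply, _root_.sub_apply]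
    ring
  simp_rw [hpolar]
  rw [integral_const_mul, integral_sub (integrable_dual_mul_four ..) (integrable_dual_mul_four ..),
    integral_dual_mul_self_mul_self hμ, integral_dual_mul_self_mul_self hμ]
  simp only [map_add, map_sub, _root_.add_apply, _root_.sub_apply, covarianceBilinDual_comm L₂ L₁]
  ring

theorem integral_dual_mul_four (hμ : ∫ x, x ∂μ = 0) (L₁ L₂ L₃ L₄ : StrongDual ℝ E) :
    ∫ x, L₁ x * L₂ x * (L₃ x * L₄ x) ∂μ =
      covarianceBilinDual μ L₁ L₂ * covarianceBilinDual μ L₃ L₄ +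
        covarianceBilinDual μ L₁ L₃ * covarianceBilinDual μ L₂ L₄ +
        covarianceBilinDual μ L₁ L₄ * covarianceBilinDual μ L₂ L₃ := by
  have hpolar (x : E) : L₁ x * L₂ x * (L₃ x * L₄ x) =
      4⁻¹ * (L₁ x * L₂ x * ((L₃ + L₄) x * (L₃ + L₄) x) -
        L₁ x * L₂ x * ((L₃ - L₄) x * (L₃ - L₄) x)) := by
    simp only [_root_.add_apply, _root_.sub_apply]
    ring
  simp_rw [hpolar]
  rw [integral_const_mul, integral_sub (integrable_dual_mul_four ..) (integrable_dual_mul_four ..),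
    integral_dual_mul_dual_mul_self hμ, integral_dual_mul_dual_mul_self hμ]
  simp only [map_add, map_sub, _root_.add_apply, _root_.sub_apply, covarianceBilinDual_comm L₄ L₃]
  ring

theorem covariance_dual_mul_dual (hμ : ∫ x, x ∂μ = 0) (L₁ L₂ L₃ L₄ : StrongDual ℝ E) :
    cov[fun x ↦ L₁ x * L₂ x, fun x ↦ L₃ x * L₄ x; μ] =
      cov[L₁, L₃; μ] * cov[L₂, L₄; μ] + cov[L₁, L₄; μ] * cov[L₂, L₃; μ] := by
  rw [covariance_eq_sub (memLp_two_dual_mul_dual L₁ L₂) (memLp_two_dual_mul_dual L₃ L₄)]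
  simp only [Pi.mul_apply, integral_dual_mul_four hμ, integral_dual_mul_dual hμ,
    ← covarianceBilinDual_eq_covariance (IsGaussian.memLp_two_id (μ := μ))]
  ring

end Isserlis

section ProductMeasure

variable {ι : Type*} [Fintype ι]

instance isGaussian_pi {E : ι → Type*} [∀ i, NormedAddCommGroup (E i)] [∀ i, NormedSpace ℝ (E i)]
    [∀ i, CompleteSpace (E i)] [∀ i, SecondCountableTopology (E i)] [∀ i, MeasurableSpace (E i)]
    [∀ i, BorelSpace (E i)] (μ : ∀ i, Measure (E i)) [∀ i, IsGaussian (μ i)] :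
    IsGaussian (Measure.pi μ) := by
  have heval (i : ι) : HasGaussianLaw (fun x : ∀ i, E i ↦ x i) (Measure.pi μ) :=
    HasLaw.hasGaussianLaw (measurePreserving_eval μ i).hasLaw
  simpa using (iIndepFun.hasGaussianLaw heval (iIndepFun_pi fun i ↦ aemeasurable_id)).isGaussian_map

lemma integral_id_pi_eq_zero {E : ι → Type*} [∀ i, NormedAddCommGroup (E i)]
    [∀ i, NormedSpace ℝ (E i)] [∀ i, CompleteSpace (E i)] [∀ i, SecondCountableTopology (E i)]
    [∀ i, MeasurableSpace (E i)] [∀ i, OpensMeasurableSpace (E i)] {μ : ∀ i, Measure (E i)}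
    [∀ i, IsProbabilityMeasure (μ i)] (hInt : ∀ i, Integrable id (μ i))
    (hμ : ∀ i, ∫ x, x ∂μ i = 0) :
    ∫ x, x ∂Measure.pi μ = 0 := by
  ext i
  rw [eval_integral (fun i ↦ integrable_eval (hInt i)), integral_eval, hμ, Pi.zero_apply]

lemma covariance_comp_eval_pi [DecidableEq ι] {Ω : Type*} [MeasurableSpace Ω] {ν : Measure Ω}
    [IsProbabilityMeasure ν] {f g : Ω → ℝ} (hf : MemLp f 2 ν) (hg : MemLp g 2 ν) (i j : ι) :
    cov[fun x ↦ f (x i), fun x ↦ g (x j); Measure.pi fun _ ↦ ν] =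
      if i = j then cov[f, g; ν] else 0 := by
  have heval (k : ι) : MeasurePreserving (Function.eval k) (Measure.pi fun _ : ι ↦ ν) ν :=
    measurePreserving_eval _ k
  have haem {h : Ω → ℝ} (hh : MemLp h 2 ν) (k : ι) :
      AEMeasurable h ((Measure.pi fun _ : ι ↦ ν).map (Function.eval k)) := by
    rw [(heval k).map_eq]
    exact hh.1.aemeasurable
  split_ifs with hij
  · subst hij
    exact (heval i).hasLaw.covariance_fun_comp hf.1.aemeasurable hg.1.aemeasurable
  · have hindep : Function.eval i ⟂ᵢ[Measure.pi fun _ : ι ↦ ν] Function.eval j :=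
      (iIndepFun_pi (X := fun _ ω ↦ ω) fun _ ↦ aemeasurable_id).indepFun hij
    have hcomp := hindep.comp₀ (heval i).aemeasurable (heval j).aemeasurable (haem hf i) (haem hg j)
    exact hcomp.covariance_eq_zero (hf.comp_measurePreserving (heval i))
      (hg.comp_measurePreserving (heval j))

lemma memLp_dotProduct_pi {ν : Measure ℝ} [IsProbabilityMeasure ν] (hν : MemLp id 2 ν)
    (u : ι → ℝ) : MemLp (fun x ↦ x ⬝ᵥ u) 2 (Measure.pi fun _ ↦ ν) :=
  memLp_finsetSum _ fun i _ ↦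
    (hν.comp_measurePreserving (measurePreserving_eval _ i)).mul_const (u i)

lemma covariance_dotProduct_pi {ν : Measure ℝ} [IsProbabilityMeasure ν] (hν : MemLp id 2 ν)
    (u w : ι → ℝ) :
    cov[fun x ↦ x ⬝ᵥ u, fun x ↦ x ⬝ᵥ w; Measure.pi fun _ ↦ ν] = Var[id; ν] * (u ⬝ᵥ w) := by
  classical
  have hmem (c : ι → ℝ) (i : ι) : MemLp (fun x : ι → ℝ ↦ x i * c i) 2 (Measure.pi fun _ ↦ ν) :=
    (hν.comp_measurePreserving (measurePreserving_eval _ i)).mul_const (c i)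
  have hcov (i j : ι) : cov[fun x : ι → ℝ ↦ x i, fun x ↦ x j; Measure.pi fun _ ↦ ν] =
      if i = j then Var[id; ν] else 0 := by
    rw [← covariance_self aemeasurable_id]
    exact covariance_comp_eval_pi hν hν i j
  simp only [dotProduct, covariance_fun_sum_fun_sum (hmem u) (hmem w), covariance_mul_const_left,
    covariance_mul_const_right, hcov, ite_mul, zero_mul, Finset.sum_ite_eq, Finset.mem_univ,
    if_true, Finset.mul_sum]
  exact Finset.sum_congr rfl fun i _ ↦ by ring

end ProductMeasure

section Frobenius

variable {m n k : Type*} [Fintype m] [Fintype n] [Fintype k]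

lemma frobInner_eq_trace_transpose_mul (X Y : Matrix m n ℝ) : frobInner X Y = (Xᵀ * Y).trace := by
  simp only [frobInner, trace, diag_apply, mul_apply, transpose_apply]
  exact Finset.sum_comm

lemma frobNorm_nonneg (X : Matrix m n ℝ) : 0 ≤ frobNorm X :=
  Real.sqrt_nonneg _

lemma abs_frobInner_le_frobNorm_mul_frobNorm (X Y : Matrix m n ℝ) :
    |frobInner X Y| ≤ frobNorm X * frobNorm Y := by
  have hsum (Z W : Matrix m n ℝ) : frobInner Z W = ∑ p : m × n, Z p.1 p.2 * W p.1 p.2 :=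
    (Fintype.sum_prod_type fun p ↦ Z p.1 p.2 * W p.1 p.2).symm
  have hnonneg : 0 ≤ frobInner X X :=
    Finset.sum_nonneg fun i _ ↦ Finset.sum_nonneg fun j _ ↦ mul_self_nonneg (X i j)
  rw [frobNorm, frobNorm, ← Real.sqrt_mul hnonneg]
  refine Real.abs_le_sqrt ?_
  simpa only [hsum, ← sq] using Finset.sum_mul_sq_le_sq_mul_sq Finset.univ
    (fun p : m × n ↦ X p.1 p.2) fun p ↦ Y p.1 p.2

open scoped Matrix.Norms.Frobenius

lemma frobNorm_eq_norm (X : Matrix m n ℝ) : frobNorm X = ‖X‖ := by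
  simp [frobNorm, frobInner, frobenius_norm_def, Real.sqrt_eq_rpow, ← sq]

lemma frobNorm_pos {X : Matrix m n ℝ} (hX : X ≠ 0) : 0 < frobNorm X := by
  rw [frobNorm_eq_norm]
  exact norm_pos_iff.mpr hX

lemma frobNorm_transpose (X : Matrix m n ℝ) : frobNorm Xᵀ = frobNorm X := by
  rw [frobNorm_eq_norm, frobNorm_eq_norm, frobenius_norm_transpose]

lemma frobNorm_mul_le (X : Matrix m n ℝ) (Y : Matrix n k ℝ) :
    frobNorm (X * Y) ≤ frobNorm X * frobNorm Y := by
  simpa only [frobNorm_eq_norm] using frobenius_norm_mul X Y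

lemma frobInner_transpose_mul_le (W X Y Z : Matrix m n ℝ) :
    frobInner (Wᵀ * X) (Yᵀ * Z) ≤ frobNorm W * frobNorm X * (frobNorm Y * frobNorm Z) := by
  refine (le_abs_self _).trans ((abs_frobInner_le_frobNorm_mul_frobNorm _ _).trans ?_)
  rw [← frobNorm_transpose W, ← frobNorm_transpose Y]
  gcongr
  · exact frobNorm_nonneg _
  · exact mul_nonneg (frobNorm_nonneg _) (frobNorm_nonneg _)
  · exact frobNorm_mul_le _ _
  · exact frobNorm_mul_le _ _

end Frobenius

/-- The law of a random real matrix with independent centred Gaussian entries of variance `v`. -/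
noncomputable def iidGaussian (ι κ : Type*) [Fintype ι] [Fintype κ] (v : ℝ≥0) :
    Measure (Matrix ι κ ℝ) :=
  Measure.pi fun _ ↦ Measure.pi fun _ ↦ gaussianReal 0 v

section GaussianMatrix

variable {ι κ τ : Type*} [Fintype ι] [Fintype κ]

instance isProbabilityMeasure_iidGaussian (v : ℝ≥0) : IsProbabilityMeasure (iidGaussian ι κ v) :=
  inferInstanceAs (IsProbabilityMeasure (Measure.pi fun _ ↦ Measure.pi fun _ ↦ gaussianReal 0 v))

lemma integral_id_pi_pi_gaussianReal (v : ℝ≥0) :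
    ∫ A, A ∂(Measure.pi fun _ : ι ↦ Measure.pi fun _ : κ ↦ gaussianReal 0 v) = 0 :=
  integral_id_pi_eq_zero (fun _ ↦ IsGaussian.integrable_id) fun _ ↦
    integral_id_pi_eq_zero (fun _ ↦ IsGaussian.integrable_id) fun _ ↦ integral_id_gaussianReal

/-- The linear form `A ↦ (A * U) i j`, on the product space rather than on `Matrix ι κ ℝ` because
the latter carries no canonical norm. -/
noncomputable def mulEntry (U : Matrix κ τ ℝ) (i : ι) (j : τ) : StrongDual ℝ (ι → κ → ℝ) :=
  LinearMap.toContinuousLinearMap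
    (entryLinearMap ℝ ℝ i j ∘ₗ mulRightLinearMap ι ℝ U ∘ₗ (ofLinearEquiv ℝ).toLinearMap)

lemma memLp_mul_apply_mul_mul_apply (v : ℝ≥0) (U V : Matrix κ τ ℝ) (i k : ι) (j l : τ) :
    MemLp (fun A ↦ (A * U) i j * (A * V) k l) 2 (iidGaussian ι κ v) :=
  memLp_two_dual_mul_dual (μ := Measure.pi fun _ ↦ Measure.pi fun _ ↦ gaussianReal 0 v)
    (mulEntry U i j) (mulEntry V k l)

lemma covariance_mul_apply [DecidableEq ι] (v : ℝ≥0) (U V : Matrix κ τ ℝ) (i k : ι) (j l : τ) :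
    cov[fun A ↦ (A * U) i j, fun A ↦ (A * V) k l; iidGaussian ι κ v] =
      if i = k then v * (Uᵀ * V) j l else 0 := by
  have hlaw : MemLp id 2 (gaussianReal 0 v) := memLp_id_gaussianReal' 2 (by simp)
  have hvar : Var[id; gaussianReal 0 v] = v := variance_id_gaussianReal
  rw [mul_apply', ← hvar, ← covariance_dotProduct_pi hlaw]
  exact covariance_comp_eval_pi (memLp_dotProduct_pi hlaw _) (memLp_dotProduct_pi hlaw _) i k

lemma integral_mul_apply_mul_mul_apply [DecidableEq ι] (v : ℝ≥0) (U V : Matrix κ τ ℝ)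
    (i k : ι) (j l : τ) :
    ∫ A, (A * U) i j * (A * V) k l ∂iidGaussian ι κ v = if i = k then v * (Uᵀ * V) j l else 0 := by
  rw [← covariance_mul_apply]
  exact (integral_dual_mul_dual (integral_id_pi_pi_gaussianReal v) (mulEntry U i j)
    (mulEntry V k l)).trans (covarianceBilinDual_eq_covariance IsGaussian.memLp_two_id _ _)

lemma covariance_mul_apply_mul_mul_apply [DecidableEq ι] (v : ℝ≥0) (U V : Matrix κ τ ℝ)
    (i k : ι) (j l : τ) :
    cov[fun A ↦ (A * U) i j * (A * V) i j, fun A ↦ (A * U) k l * (A * V) k l; iidGaussian ι κ v] =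
      if i = k then
        v ^ 2 * ((Uᵀ * U) j l * (Vᵀ * V) j l + (Uᵀ * V) j l * (Vᵀ * U) j l) else 0 := by
  refine (covariance_dual_mul_dual (integral_id_pi_pi_gaussianReal v) (mulEntry U i j)
    (mulEntry V i j) (mulEntry U k l) (mulEntry V k l)).trans ?_
  change cov[fun A ↦ (A * U) i j, fun A ↦ (A * U) k l; iidGaussian ι κ v] *
        cov[fun A ↦ (A * V) i j, fun A ↦ (A * V) k l; iidGaussian ι κ v] +
      cov[fun A ↦ (A * U) i j, fun A ↦ (A * V) k l; iidGaussian ι κ v] *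
        cov[fun A ↦ (A * V) i j, fun A ↦ (A * U) k l; iidGaussian ι κ v] = _
  simp only [covariance_mul_apply]
  split_ifs <;> ring

variable [Fintype τ]

lemma memLp_frobInner_mul (v : ℝ≥0) (U V : Matrix κ τ ℝ) :
    MemLp (fun A ↦ frobInner (A * U) (A * V)) 2 (iidGaussian ι κ v) :=
  memLp_finsetSum _ fun i _ ↦ memLp_finsetSum _ fun j _ ↦
    memLp_mul_apply_mul_mul_apply v U V i i j j

lemma integral_frobInner_mul (v : ℝ≥0) (U V : Matrix κ τ ℝ) :
    ∫ A, frobInner (A * U) (A * V) ∂iidGaussian ι κ v = Fintype.card ι * v * frobInner U V := by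
  classical
  have hInt (i : ι) (j : τ) :
      Integrable (fun A ↦ (A * U) i j * (A * V) i j) (iidGaussian ι κ v) :=
    (memLp_mul_apply_mul_mul_apply v U V i i j j).integrable one_le_two
  rw [frobInner_eq_trace_transpose_mul U V]
  simp only [frobInner]
  rw [integral_finsetSum _ fun i _ ↦ integrable_finsetSum _ fun j _ ↦ hInt i j]
  simp only [integral_finsetSum _ fun j _ ↦ hInt _ j, integral_mul_apply_mul_mul_apply, if_true,
    ← Finset.mul_sum, Finset.sum_const, Finset.card_univ, nsmul_eq_mul, trace, diag_apply]
  ring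

theorem variance_frobInner_mul (v : ℝ≥0) (U V : Matrix κ τ ℝ) :
    Var[fun A ↦ frobInner (A * U) (A * V); iidGaussian ι κ v] =
      Fintype.card ι * v ^ 2 *
        (frobInner (Uᵀ * U) (Vᵀ * V) + frobInner (Uᵀ * V) (Vᵀ * U)) := by
  classical
  have hmem (i : ι) (j : τ) := memLp_mul_apply_mul_mul_apply v U V i i j j
  rw [← covariance_self (memLp_frobInner_mul v U V).1.aemeasurable]
  simp only [frobInner]
  rw [covariance_fun_sum_fun_sum (fun i ↦ memLp_finsetSum _ fun j _ ↦ hmem i j)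
    fun i ↦ memLp_finsetSum _ fun j _ ↦ hmem i j]
  simp only [covariance_fun_sum_fun_sum (hmem _) (hmem _), covariance_mul_apply_mul_mul_apply,
    Finset.sum_ite_irrel, Finset.sum_const_zero, Finset.sum_ite_eq, Finset.mem_univ, if_true,
    Finset.sum_const, Finset.card_univ, nsmul_eq_mul, ← Finset.mul_sum, Finset.sum_add_distrib]
  ring

lemma variance_frobInner_mul_le (v : ℝ≥0) (U V : Matrix κ τ ℝ) :
    Var[fun A ↦ frobInner (A * U) (A * V); iidGaussian ι κ v] ≤
      2 * Fintype.card ι * v ^ 2 * (frobNorm U * frobNorm V) ^ 2 := by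
  have hUV : frobInner (Uᵀ * U) (Vᵀ * V) + frobInner (Uᵀ * V) (Vᵀ * U) ≤
      2 * (frobNorm U * frobNorm V) ^ 2 :=
    (add_le_add (frobInner_transpose_mul_le U U V V) (frobInner_transpose_mul_le U V V U)).trans_eq
      (by ring)
  calc _ = _ := variance_frobInner_mul v U V
    _ ≤ Fintype.card ι * v ^ 2 * (2 * (frobNorm U * frobNorm V) ^ 2) := by gcongr
    _ = _ := by ring

theorem stmt8_general (v : ℝ≥0) {U V : Matrix κ τ ℝ} (hU : U ≠ 0) (hV : V ≠ 0) {t : ℝ}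
    (ht : 0 < t) :
    iidGaussian ι κ v {A | t * (frobNorm U * frobNorm V) ≤
        |frobInner (A * U) (A * V) - Fintype.card ι * v * frobInner U V|} ≤
      ENNReal.ofReal (2 * Fintype.card ι * v ^ 2 / t ^ 2) := by
  have hUV : 0 < frobNorm U * frobNorm V := mul_pos (frobNorm_pos hU) (frobNorm_pos hV)
  rw [← integral_frobInner_mul]
  refine (meas_ge_le_variance_div_sq (memLp_frobInner_mul v U V) (mul_pos ht hUV)).trans ?_
  refine ENNReal.ofReal_le_ofReal ?_
  calc _ ≤ 2 * Fintype.card ι * v ^ 2 * (frobNorm U * frobNorm V) ^ 2 /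
          (t * (frobNorm U * frobNorm V)) ^ 2 :=
        div_le_div_of_nonneg_right (variance_frobInner_mul_le v U V) (sq_nonneg _)
    _ = 2 * Fintype.card ι * v ^ 2 / t ^ 2 := by
        rw [mul_pow t, mul_div_mul_right _ _ (pow_pos hUV 2).ne']

end GaussianMatrix

lemma gaussianMatrix_eq_iidGaussian (D r : ℕ) :
    gaussianMatrix D r = iidGaussian (Fin D) (Fin r) (D : ℝ≥0)⁻¹ :=
  rfl

/-- Chebyshev-type concentration of the Frobenius inner product `⟨AU, AV⟩_F` around
`⟨U, V⟩_F` for a Gaussian random matrix `A`: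
`P(|⟨AU,AV⟩_F − ⟨U,V⟩_F| ≥ t‖U‖_F‖V‖_F) ≤ 2/(D t²)`. -/
theorem stmt8 (D r m : ℕ) (hD : 0 < D) (hr : 0 < r) (hm : 0 < m)
    (U V : Matrix (Fin r) (Fin m) ℝ) (hU : U ≠ 0) (hV : V ≠ 0)
    (t : ℝ) (ht : 0 < t) :
    gaussianMatrix D r
        {A : Matrix (Fin D) (Fin r) ℝ |
          t * (frobNorm U * frobNorm V) ≤ |frobInner (A * U) (A * V) - frobInner U V|} ≤
      ENNReal.ofReal (2 / (D * t ^ 2)) := by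
  have hD' : (D : ℝ) ≠ 0 := Nat.cast_ne_zero.mpr hD.ne'
  have hbound : 2 * (D : ℝ) * ((D : ℝ) ^ 2)⁻¹ / t ^ 2 = 2 / (D * t ^ 2) := by field_simp
  simpa [gaussianMatrix_eq_iidGaussian, hD', hbound] using
    stmt8_general (ι := Fin D) (D : ℝ≥0)⁻¹ hU hV ht
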